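/- arXiv:2604.03609 — 2 statements merged into one kernel-verified Lean document; each statement's English description precedes it below -/
import Mathlib

section
/- For every rational number t with 0 < t < 1, the number (2/3)·(3t² − 1)/((3t + 1)(t − 1)) is not the square of a rational number. -/
/-!
With `ρ = (1 - t) / (3 t + 1) = r / k` in lowest terms, a rational `s` as in the statement makes
`3 k r (3 r² + 6 k r - k²)` a perfect square. Comparing coprime factors, modulo `3` one must
have `3 ∣ k`, and then `k = 9 e²`, `r = m²` and `n² = m⁴ + 18 m² e² - 27 e⁴` with `m, e` coprime.

This quartic covers the elliptic curve `Y² = X (X² + 18 X - 27)`, which has rank `0`; its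
2-isogenous curve is `y² = x (x² - 9 x + 27)`. The quartic is excluded by infinite descent along
the two isogenies. In each direction (`quartic_to_dual`, `dual_to_quartic`) a difference of two
squares is `27` times a fourth power up to a power of `2`, and `coprime_factors` splits it as
`27 a⁴ · b⁴`. A round trip produces a solution of the same quartic with strictly smaller `e`.
-/

/-- A common prime factor of `u` and `v` divides `3 e`, because it divides `u v = 27 e⁴`, and then
also `M`. -/
lemma coprime_of_add_or_sub (u v e M c : ℤ) (hM : IsCoprime M (3 * e)) (h : u * v = 27 * e ^ 4)
    (hs : M ^ 2 = u + v + c * (3 * e) ∨ M ^ 2 = v - u + c * (3 * e)) : IsCoprime u v := by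
  apply isCoprime_of_prime_dvd
  · rintro ⟨rfl, rfl⟩
    have he : e = 0 := by simpa using h
    subst he
    -- here `M` is both a unit and zero
    have : M = 0 := by simpa using hs
    subst this
    exact not_isCoprime_zero_zero (by simpa using hM)
  · intro p hp hu hv
    have h1 : p ∣ 3 * e := by
      apply hp.dvd_of_dvd_pow (n := 4)
      have : (3 * e) ^ 4 = u * (3 * v) := by linear_combination (-3) * h
      rw [this]
      exact hu.mul_right _
    have h2 : p ∣ M := by
      apply hp.dvd_of_dvd_pow (n := 2)
      rcases hs with hs | hs <;> rw [hs]
      · exact dvd_add (dvd_add hu hv) (h1.mul_left _)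
      · exact dvd_add (dvd_sub hv hu) (h1.mul_left _)
    exact hp.not_isUnit (hM.isUnit_of_dvd' h2 h1)

lemma pow_four_of_coprime (u v e : ℤ) (hu : 0 < u) (hv : 0 < v) (he : 0 < e)
    (hc : IsCoprime u v) (h : u * v = e ^ 4) :
    ∃ a b : ℤ, 0 < a ∧ 0 < b ∧ a * b = e ∧ u = a ^ 4 ∧ v = b ^ 4 := by
  lift u to ℕ using hu.le
  lift v to ℕ using hv.le
  lift e to ℕ using he.le
  rw [Nat.isCoprime_iff_coprime] at hc
  norm_cast at h hu hv he
  obtain ⟨a, ha⟩ := exists_eq_pow_of_mul_eq_pow (Nat.isUnit_iff.2 hc) h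
  obtain ⟨b, hb⟩ := exists_eq_pow_of_mul_eq_pow (Nat.isUnit_iff.2 hc.symm)
    (by rw [mul_comm]; exact h)
  have hab : a * b = e := by
    rw [ha, hb, ← mul_pow] at h
    exact Nat.pow_left_injective (by norm_num : (4 : ℕ) ≠ 0) h
  have ha0 : 0 < a := Nat.pos_of_ne_zero (by rintro rfl; simp at hab; omega)
  have hb0 : 0 < b := Nat.pos_of_ne_zero (by rintro rfl; simp at hab; omega)
  exact ⟨a, b, by exact_mod_cast ha0, by exact_mod_cast hb0, by exact_mod_cast hab,
    by exact_mod_cast ha, by exact_mod_cast hb⟩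

lemma coprime_factors_left (u v e : ℤ) (hu : 0 < u) (hv : 0 < v) (he : 0 < e)
    (hc : IsCoprime u v) (h : u * v = 27 * e ^ 4) (h3 : ¬ (3 : ℤ) ∣ v) :
    ∃ a b : ℤ, 0 < a ∧ 0 < b ∧ a * b = e ∧ u = 27 * a ^ 4 ∧ v = b ^ 4 := by
  have hc3 : IsCoprime (27 : ℤ) v := by
    have : IsCoprime (3 : ℤ) v := (Int.prime_three.coprime_iff_not_dvd).2 h3
    simpa using this.pow_left (m := 3)
  obtain ⟨w, rfl⟩ : (27 : ℤ) ∣ u := hc3.dvd_of_dvd_mul_right ⟨_, h⟩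
  obtain ⟨a, b, ha, hb, hab, h1, h2⟩ := pow_four_of_coprime w v e (by omega) hv he
    hc.of_mul_left_right (by linarith)
  exact ⟨a, b, ha, hb, hab, by rw [h1], h2⟩

lemma coprime_factors (u v e : ℤ) (hu : 0 < u) (hv : 0 < v) (he : 0 < e)
    (hc : IsCoprime u v) (h : u * v = 27 * e ^ 4) :
    ∃ a b : ℤ, 0 < a ∧ 0 < b ∧ a * b = e ∧
      ((u = 27 * a ^ 4 ∧ v = b ^ 4) ∨ (v = 27 * a ^ 4 ∧ u = b ^ 4)) := by
  by_cases h3 : (3 : ℤ) ∣ v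
  · have h3' : ¬ (3 : ℤ) ∣ u := fun hu3 =>
      Int.prime_three.not_isUnit (hc.isUnit_of_dvd' hu3 h3)
    obtain ⟨a, b, ha, hb, hab, h1, h2⟩ := coprime_factors_left v u e hv hu he hc.symm
      (by linarith) h3'
    exact ⟨a, b, ha, hb, hab, Or.inr ⟨h1, h2⟩⟩
  · obtain ⟨a, b, ha, hb, hab, h1, h2⟩ := coprime_factors_left u v e hu hv he hc h h3
    exact ⟨a, b, ha, hb, hab, Or.inl ⟨h1, h2⟩⟩

/-- If `3 ∣ m`, then `3 ∤ e` and the right-hand side has 3-adic valuation exactly `3`,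
which is odd. -/
lemma not_three_dvd (m e n c : ℤ) (hc : IsCoprime m e)
    (h : n ^ 2 = m ^ 4 + 9 * c * m ^ 2 * e ^ 2 + 27 * e ^ 4 ∨
      n ^ 2 = m ^ 4 + 9 * c * m ^ 2 * e ^ 2 - 27 * e ^ 4) : ¬ (3 : ℤ) ∣ m := by
  rintro ⟨k, rfl⟩
  have h3 : ¬ (3 : ℤ) ∣ e := fun he =>
    Int.prime_three.not_isUnit (hc.isUnit_of_dvd' ⟨k, rfl⟩ he)
  have h9 : (3 : ℤ) ∣ n := by
    apply Int.prime_three.dvd_of_dvd_pow (n := 2)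
    rcases h with h | h
    · exact ⟨27 * k ^ 4 + 27 * c * k ^ 2 * e ^ 2 + 9 * e ^ 4, by rw [h]; ring⟩
    · exact ⟨27 * k ^ 4 + 27 * c * k ^ 2 * e ^ 2 - 9 * e ^ 4, by rw [h]; ring⟩
  obtain ⟨n, rfl⟩ := h9
  have h9 : (3 : ℤ) ∣ n := by
    apply Int.prime_three.dvd_of_dvd_pow (n := 2)
    rcases h with h | h
    · exact ⟨3 * k ^ 4 + 3 * c * k ^ 2 * e ^ 2 + e ^ 4, by linarith⟩
    · exact ⟨3 * k ^ 4 + 3 * c * k ^ 2 * e ^ 2 - e ^ 4, by linarith⟩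
  obtain ⟨n, rfl⟩ := h9
  apply h3
  apply Int.prime_three.dvd_of_dvd_pow (n := 4)
  rcases h with h | h
  · exact ⟨n ^ 2 - k ^ 4 - c * k ^ 2 * e ^ 2, by linarith⟩
  · exact ⟨-n ^ 2 + k ^ 4 + c * k ^ 2 * e ^ 2, by linarith⟩

lemma coprime_three_mul {m e : ℤ} (hc : IsCoprime m e) (h3 : ¬ (3 : ℤ) ∣ m) :
    IsCoprime m (3 * e) :=
  ((Int.prime_three.coprime_iff_not_dvd).2 h3).symm.mul_right hc

lemma three_dvd_of_sq_add_sq {x y : ℤ} (h : (3 : ℤ) ∣ x ^ 2 + y ^ 2) : (3 : ℤ) ∣ x := by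
  rw [Int.dvd_iff_emod_eq_zero] at *
  have hx : x % 3 = 0 ∨ x % 3 = 1 ∨ x % 3 = 2 := by omega
  have hy : y % 3 = 0 ∨ y % 3 = 1 ∨ y % 3 = 2 := by omega
  rcases hx with hx | hx | hx <;> rcases hy with hy | hy | hy <;>
    simp [pow_two, Int.add_emod, Int.mul_emod, hx, hy] at h ⊢

lemma coprime_roots {a b u v : ℤ} (hc : IsCoprime u v)
    (h : (u = 27 * a ^ 4 ∧ v = b ^ 4) ∨ (v = 27 * a ^ 4 ∧ u = b ^ 4)) : IsCoprime b a := by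
  have : IsCoprime (27 * a ^ 4) (b ^ 4) := by
    rcases h with ⟨rfl, rfl⟩ | ⟨rfl, rfl⟩
    · exact hc
    · exact hc.symm
  exact ((IsCoprime.pow_iff (by norm_num) (by norm_num)).1 this.of_mul_left_right).symm

lemma quartic_to_dual (m e n : ℤ) (he : 0 < e) (hc : IsCoprime m e)
    (h : n ^ 2 = m ^ 4 + 18 * m ^ 2 * e ^ 2 - 27 * e ^ 4) :
    ∃ a b : ℤ, 0 < a ∧ a ≤ e ∧ IsCoprime b a ∧
      m ^ 2 = b ^ 4 - 9 * b ^ 2 * a ^ 2 + 27 * a ^ 4 := by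
  have h3 : ¬ (3 : ℤ) ∣ m := not_three_dvd m e n 2 hc (Or.inr (by linarith))
  have hM := coprime_three_mul hc h3
  -- `(m² + 9e² - n)(m² + 9e² + n) = 108 e⁴`, and both factors are even
  have hpar : (2 : ℤ) ∣ m ^ 2 + 9 * e ^ 2 - n := by
    have hp : (2 : ℤ) ∣ (m ^ 2 + 9 * e ^ 2 - n) * (m ^ 2 + 9 * e ^ 2 - n) :=
      ⟨(m ^ 2 + 9 * e ^ 2) ^ 2 - n * (m ^ 2 + 9 * e ^ 2) - 54 * e ^ 4, by linear_combination h⟩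
    exact (Int.prime_two.dvd_or_dvd hp).elim id id
  obtain ⟨u, hu⟩ := hpar
  obtain ⟨v, hv⟩ : ∃ v, v = m ^ 2 + 9 * e ^ 2 - u := ⟨_, rfl⟩
  have hn : n = m ^ 2 + 9 * e ^ 2 - 2 * u := by linarith
  have huv : u * v = 27 * e ^ 4 := by
    subst hn; subst hv; linarith
  have hcuv : IsCoprime u v := coprime_of_add_or_sub u v e m (-3 * e) hM huv
    (Or.inl (by rw [hv]; ring))
  have he4 : 0 < 27 * e ^ 4 := by positivity
  have hsum : 0 < u + v := by rw [hv]; nlinarith [sq_nonneg m, pow_pos he 2]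
  have hu0 : 0 < u := by
    by_contra! hneg
    nlinarith
  have hv0 : 0 < v := by
    by_contra! hneg
    nlinarith
  obtain ⟨a, b, ha, hb, hab, hd⟩ := coprime_factors u v e hu0 hv0 he hcuv huv
  refine ⟨a, b, ha, by nlinarith, coprime_roots hcuv hd, ?_⟩
  subst hab
  rcases hd with ⟨h1, h2⟩ | ⟨h1, h2⟩ <;> subst h1 <;> linarith

/-- The two signs correspond to which of the two factors of `27 f⁴` carries the `27`; the negative
one is impossible modulo `3`. -/
lemma sign_resolution {M a b u v f : ℤ} (h3 : ¬ (3 : ℤ) ∣ M) (hab : a * b = f)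
    (hd : (u = 27 * a ^ 4 ∧ v = b ^ 4) ∨ (v = 27 * a ^ 4 ∧ u = b ^ 4))
    (h : M ^ 2 = v - u + 18 * f ^ 2) : M ^ 2 = b ^ 4 + 18 * b ^ 2 * a ^ 2 - 27 * a ^ 4 := by
  subst hab
  rcases hd with ⟨rfl, rfl⟩ | ⟨rfl, rfl⟩
  · linarith
  · exact absurd (three_dvd_of_sq_add_sq (y := b ^ 2)
      ⟨9 * a ^ 4 + 6 * a ^ 2 * b ^ 2, by rw [h]; ring⟩) h3

lemma dual_to_quartic (m f n : ℤ) (hf : 0 < f) (hc : IsCoprime m f)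
    (h : n ^ 2 = m ^ 4 - 9 * m ^ 2 * f ^ 2 + 27 * f ^ 4) :
    ∃ a b k : ℤ, 0 < a ∧ a < f ∧ IsCoprime b a ∧
      k ^ 2 = b ^ 4 + 18 * b ^ 2 * a ^ 2 - 27 * a ^ 4 := by
  wlog hn : 0 ≤ n generalizing n
  · exact this (-n) (by rw [← h]; ring) (by linarith)
  have h3 : ¬ (3 : ℤ) ∣ m := not_three_dvd m f n (-1) hc (Or.inl (by linarith))
  have hf4 : 0 < f ^ 4 := by positivity
  rcases Int.even_or_odd' f with ⟨g, rfl | hodd⟩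
  · -- `f = 2g`: `(n - B)(n + B) = 108 g⁴` with `B = m² - 18g²`, and both factors are even
    have hg : 0 < g := by linarith
    have hM := coprime_three_mul hc.of_mul_right_right h3
    have hpar : (2 : ℤ) ∣ n - (m ^ 2 - 18 * g ^ 2) := by
      have hp : (2 : ℤ) ∣ (n - (m ^ 2 - 18 * g ^ 2)) * (n - (m ^ 2 - 18 * g ^ 2)) :=
        ⟨(m ^ 2 - 18 * g ^ 2) ^ 2 - n * (m ^ 2 - 18 * g ^ 2) + 54 * g ^ 4, by
          linear_combination h⟩
      exact (Int.prime_two.dvd_or_dvd hp).elim id id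
    obtain ⟨u, hu⟩ := hpar
    obtain ⟨v, hv⟩ : ∃ v, v = u + (m ^ 2 - 18 * g ^ 2) := ⟨_, rfl⟩
    have hn' : n = 2 * u + (m ^ 2 - 18 * g ^ 2) := by linarith
    have huv : u * v = 27 * g ^ 4 := by subst hn'; subst hv; linarith
    have hcuv : IsCoprime u v := coprime_of_add_or_sub u v g m (6 * g) hM huv
      (Or.inr (by rw [hv]; ring))
    have hg4 : 0 < 27 * g ^ 4 := by positivity
    have hsum : 0 ≤ u + v := by linarith
    have hu0 : 0 < u := by
      by_contra! hneg
      nlinarith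
    have hv0 : 0 < v := by
      by_contra! hneg
      nlinarith
    obtain ⟨a, b, ha, hb, hab, hd⟩ := coprime_factors u v g hu0 hv0 hg hcuv huv
    exact ⟨a, b, m, ha, by nlinarith, coprime_roots hcuv hd,
      sign_resolution h3 hab hd (by rw [hv]; ring)⟩
  · -- `f` odd: `(2n - B)(2n + B) = 27 f⁴` with `B = 2m² - 9f²`
    have h3' : ¬ (3 : ℤ) ∣ 2 * m := by omega
    have hM : IsCoprime (2 * m) (3 * f) := by
      apply coprime_three_mul _ h3'
      exact IsCoprime.mul_left ⟨-g, 1, by rw [hodd]; ring⟩ hc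
    obtain ⟨u, hu⟩ : ∃ u, u = 2 * n - (2 * m ^ 2 - 9 * f ^ 2) := ⟨_, rfl⟩
    obtain ⟨v, hv⟩ : ∃ v, v = 2 * n + (2 * m ^ 2 - 9 * f ^ 2) := ⟨_, rfl⟩
    have huv : u * v = 27 * f ^ 4 := by rw [hu, hv]; linear_combination 4 * h
    have hcuv : IsCoprime u v := coprime_of_add_or_sub u v f (2 * m) (6 * f) hM huv
      (Or.inr (by rw [hu, hv]; ring))
    have hsum : 0 ≤ u + v := by linarith
    have hu0 : 0 < u := by
      by_contra! hneg
      nlinarith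
    have hv0 : 0 < v := by
      by_contra! hneg
      nlinarith
    obtain ⟨a, b, ha, hb, hab, hd⟩ := coprime_factors u v f hu0 hv0 hf hcuv huv
    have key := sign_resolution h3' hab hd (by rw [hu, hv]; ring)
    -- `b = 1` would make the new quartic negative, so `a < a b = f`
    have hb1 : b ≠ 1 := by
      rintro rfl
      nlinarith [sq_nonneg m, pow_pos ha 2]
    have hb2 : 2 ≤ b := by omega
    exact ⟨a, b, 2 * m, ha, by nlinarith, coprime_roots hcuv hd, key⟩

lemma no_quartic (N : ℕ) : ∀ m e n : ℤ, e.toNat = N → 0 < e → IsCoprime m e →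
    n ^ 2 ≠ m ^ 4 + 18 * m ^ 2 * e ^ 2 - 27 * e ^ 4 := by
  induction N using Nat.strong_induction_on with
  | _ N ih =>
    intro m e n hN he hc h
    obtain ⟨a, b, ha, hae, hab, h1⟩ := quartic_to_dual m e n he hc h
    obtain ⟨a', b', k, ha', haa, hab', h2⟩ := dual_to_quartic b a m ha hab h1
    exact ih a'.toNat (by omega) b' a' k rfl ha' hab' h2

lemma sq_of_coprime_mul_sq {x y w : ℤ} (hx : 0 < x) (hc : IsCoprime x y) (h : x * y = w ^ 2) :
    (∃ z, x = z ^ 2) ∧ ∃ z, y = z ^ 2 := by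
  have hy : 0 ≤ y := by
    by_contra! hneg
    nlinarith [sq_nonneg w]
  constructor
  · obtain ⟨z, hz | hz⟩ := Int.sq_of_isCoprime hc h
    · exact ⟨z, hz⟩
    · nlinarith [sq_nonneg z]
  · obtain ⟨z, hz | hz⟩ := Int.sq_of_isCoprime hc.symm (by rw [mul_comm]; exact h)
    · exact ⟨z, hz⟩
    · exact ⟨0, by nlinarith [sq_nonneg z]⟩

lemma no_int_solution (k r w : ℤ) (hk : 0 < k) (hr : 0 < r) (hc : IsCoprime k r) :
    3 * k * r * (3 * r ^ 2 + 6 * k * r - k ^ 2) ≠ w ^ 2 := by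
  intro h
  by_cases h3 : (3 : ℤ) ∣ k
  · obtain ⟨c, rfl⟩ := h3
    have hc0 : 0 < c := by linarith
    have hrc : IsCoprime r (3 * c) := hc.symm
    have hw : (3 : ℤ) ∣ w := Int.prime_three.dvd_of_dvd_pow (n := 2)
      ⟨3 * c * r * (3 * r ^ 2 + 6 * (3 * c) * r - (3 * c) ^ 2), by rw [← h]; ring⟩
    obtain ⟨w, rfl⟩ := hw
    have h' : r * (3 * c * (r ^ 2 + 6 * c * r - 3 * c ^ 2)) = w ^ 2 := by linarith
    have hq : IsCoprime (3 * c) (r ^ 2 + 6 * c * r - 3 * c ^ 2) := by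
      have := (hrc.symm.pow_right (n := 2)).add_mul_left_right (2 * r - c)
      rwa [show r ^ 2 + 6 * c * r - 3 * c ^ 2 = r ^ 2 + 3 * c * (2 * r - c) by ring]
    have hrq : IsCoprime r (r ^ 2 + 6 * c * r - 3 * c ^ 2) := by
      have h1 : IsCoprime r (3 * c * (-c)) := hrc.mul_right hrc.of_mul_right_right.neg_right
      have := h1.add_mul_left_right (r + 6 * c)
      rwa [show r ^ 2 + 6 * c * r - 3 * c ^ 2 = 3 * c * (-c) + r * (r + 6 * c) by ring]
    obtain ⟨⟨m, hm⟩, z, hz⟩ := sq_of_coprime_mul_sq hr (hrc.mul_right hrq) h'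
    obtain ⟨⟨x, hx⟩, n, hn⟩ := sq_of_coprime_mul_sq (by linarith) hq hz
    obtain ⟨e, rfl⟩ : (3 : ℤ) ∣ x :=
      Int.prime_three.dvd_of_dvd_pow (n := 2) ⟨c, hx.symm⟩
    have hce : c = 3 * e ^ 2 := by linarith
    subst hce hm
    have he0 : e ≠ 0 := by rintro rfl; simp at hc0
    have hme : IsCoprime m e :=
      (IsCoprime.pow_iff (by norm_num) (by norm_num)).1
        hrc.of_mul_right_right.of_mul_right_right
    refine no_quartic _ m |e| n rfl (abs_pos.2 he0) ?_ ?_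
    · rcases abs_choice e with h | h <;> rw [h]
      · exact hme
      · exact hme.neg_right
    · have h4 : |e| ^ 4 = e ^ 4 := by
        rw [show |e| ^ 4 = (|e| ^ 2) ^ 2 by ring, sq_abs]; ring
      rw [sq_abs, h4, ← hn]
      ring
  · -- the two factors are coprime, so `3 r² + 6 k r - k² = z²`, impossible modulo `3`
    have hk3 : IsCoprime k 3 := ((Int.prime_three.coprime_iff_not_dvd).2 h3).symm
    have hkq : IsCoprime k (3 * r ^ 2 + 6 * k * r - k ^ 2) := by
      have := (hk3.mul_right (hc.pow_right (n := 2))).add_mul_left_right (6 * r - k)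
      rwa [show 3 * r ^ 2 + 6 * k * r - k ^ 2 = 3 * r ^ 2 + k * (6 * r - k) by ring]
    have hrq : IsCoprime r (3 * r ^ 2 + 6 * k * r - k ^ 2) := by
      have := ((hc.symm.pow_right (n := 2)).neg_right).add_mul_left_right (3 * r + 6 * k)
      rwa [show 3 * r ^ 2 + 6 * k * r - k ^ 2 = -(k ^ 2) + r * (3 * r + 6 * k) by ring]
    have h3q : IsCoprime 3 (3 * r ^ 2 + 6 * k * r - k ^ 2) := by
      have := ((hk3.symm.pow_right (n := 2)).neg_right).add_mul_left_right (r ^ 2 + 2 * k * r)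
      rwa [show 3 * r ^ 2 + 6 * k * r - k ^ 2 = -(k ^ 2) + 3 * (r ^ 2 + 2 * k * r) by ring]
    have h' : (3 * k * r) * (3 * r ^ 2 + 6 * k * r - k ^ 2) = w ^ 2 := h
    obtain ⟨-, z, hz⟩ := sq_of_coprime_mul_sq (by positivity)
      ((h3q.mul_left hkq).mul_left hrq) h'
    exact h3 (three_dvd_of_sq_add_sq (x := k) (y := z)
      ⟨r ^ 2 + 2 * k * r, by rw [← hz]; ring⟩)

theorem stmt_3 (t : ℚ) (h0 : 0 < t) (h1 : t < 1) (s : ℚ) :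
    s ^ 2 ≠ (2 / 3) * (3 * t ^ 2 - 1) / ((3 * t + 1) * (t - 1)) := by
  intro h
  have ht1 : t - 1 ≠ 0 := by linarith
  have ht2 : 3 * t + 1 ≠ 0 := by positivity
  obtain ⟨ρ, hρ⟩ : ∃ ρ, ρ = (1 - t) / (3 * t + 1) := ⟨_, rfl⟩
  have hρ0 : 0 < ρ := by rw [hρ]; apply div_pos <;> linarith
  have key : 3 * ρ * (3 * ρ ^ 2 + 6 * ρ - 1) = (6 * ρ * s) ^ 2 := by
    rw [mul_pow, h, hρ]
    field_simp
    ring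
  have hd : (ρ.den : ℚ) ≠ 0 := by exact_mod_cast ρ.den_nz
  have hnum : (ρ.num : ℚ) = ρ * ρ.den := (Rat.mul_den_eq_num ρ).symm
  have hsq : IsSquare (((3 * (ρ.den : ℤ) * ρ.num *
      (3 * ρ.num ^ 2 + 6 * (ρ.den : ℤ) * ρ.num - (ρ.den : ℤ) ^ 2) : ℤ)) : ℚ) := by
    refine ⟨(ρ.den : ℚ) ^ 2 * (6 * ρ * s), ?_⟩
    push_cast
    rw [hnum]
    linear_combination (ρ.den : ℚ) ^ 4 * key
  rw [Rat.isSquare_intCast_iff] at hsq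
  obtain ⟨w, hw⟩ := hsq
  refine no_int_solution ρ.den ρ.num w (by exact_mod_cast ρ.den_pos) (Rat.num_pos.2 hρ0) ?_
    (by rw [hw]; ring)
  exact (Int.isCoprime_iff_gcd_eq_one.2 (by simpa [Int.gcd] using ρ.reduced)).symm
end

section
/- The rational points of the elliptic curve y² = x³ + 2x² − 3x are exactly (0,0), (1,0), (−3,0), (−1, ±2), (3, ±6), together with the point at infinity. -/
/-!
For a point `P = (x, y)` of `y² = x(x - 1)(x + 3)`, the duplication formula makes each of
`x(2P)`, `x(2P) - 1`, `x(2P) + 3` a square with denominator `(2y)²`. Writing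
`A = 2y`, `D = x² - 2x - 3`, `B = x² + 3`, `C = x² + 6x - 3`, this says
`A² + D² = B²` and `4A² + D² = C²`.

This system has only the rational solutions with `A = 0` or `D = 0` (`rat_solutions`), so either
`y = 0` or `(x - 3)(x + 1) = 0`, which gives exactly the listed points.

After clearing denominators and common factors, the system is handled by infinite descent on `|A|`
(`descent`): if `D` is odd, both equations are primitive Pythagorean triples; comparing the two
parametrisations and factoring the resulting equality of products (`four_number`) gives a smaller
solution of the same system (`smaller_solution`). If `D` is even, `(D / 2, A)` is a solution
with odd second entry.
-/

/-- Two factorisations of the same nonzero integer have a common refinement. -/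
lemma four_number {m N p q : ℤ} (h : m * N = p * q) (hm : m ≠ 0) :
    ∃ α β γ δ : ℤ, m = α * β ∧ N = γ * δ ∧ p = α * γ ∧ q = β * δ ∧ IsCoprime β γ := by
  obtain ⟨α, β, γ, hα, hc, h1, h2⟩ : ∃ α β γ : ℤ, α ≠ 0 ∧ IsCoprime β γ ∧
      m = α * β ∧ p = α * γ := by
    have hg : 0 < Int.gcd m p := Int.gcd_pos_of_ne_zero_left _ hm
    obtain ⟨β, γ, hc, h1, h2⟩ := Int.exists_gcd_one hg
    exact ⟨Int.gcd m p, β, γ, by exact_mod_cast hg.ne', Int.isCoprime_iff_gcd_eq_one.2 hc,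
      by rw [mul_comm]; exact h1, by rw [mul_comm]; exact h2⟩
  subst h1 h2
  have h3 : β * N = γ * q := mul_left_cancel₀ hα (by linear_combination h)
  have hβ : β ≠ 0 := right_ne_zero_of_mul hm
  obtain ⟨δ, rfl⟩ : β ∣ q := hc.dvd_of_dvd_mul_left ⟨N, h3.symm⟩
  exact ⟨α, β, γ, δ, rfl, mul_left_cancel₀ hβ (by linear_combination h3), rfl, rfl, hc⟩

/-- A primitive Pythagorean triple whose odd leg is `1` mod `4`: its parameters `p, q` satisfy
`q` even, which fixes the order of `p` and `q`. -/
lemma pythagorean_param {a d b : ℤ} (h : a ^ 2 + d ^ 2 = b ^ 2) (hd : d % 4 = 1)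
    (hc : IsCoprime a d) :
    ∃ p q : ℤ, d = p ^ 2 - q ^ 2 ∧ a = 2 * p * q ∧ IsCoprime p q ∧ p % 2 = 1 ∧ q % 2 = 0 := by
  have hb : b ≠ 0 := by
    rintro rfl
    have : d = 0 := by nlinarith [sq_nonneg a, sq_nonneg d]
    omega
  have ht : PythagoreanTriple d a |b| := by
    unfold PythagoreanTriple
    rw [abs_mul_abs_self]; linear_combination h
  obtain ⟨p, q, h1, h2, -, h4, h5, -⟩ := ht.coprime_classification'
    (Int.isCoprime_iff_gcd_eq_one.1 hc.symm) (by omega) (abs_pos.2 hb)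
  refine ⟨p, q, h1, h2, Int.isCoprime_iff_gcd_eq_one.2 h4, ?_⟩
  rcases h5 with ⟨hp, hq⟩ | ⟨hp, hq⟩
  · exfalso
    obtain ⟨r, rfl⟩ : ∃ r, p = 2 * r := ⟨p / 2, by omega⟩
    obtain ⟨s, rfl⟩ : ∃ s, q = 2 * s + 1 := ⟨q / 2, by omega⟩
    have : d = 4 * (r ^ 2 - s ^ 2 - s) - 1 := by rw [h1]; ring
    omega
  · exact ⟨hp, hq⟩

/-- The descent step, with `d` normalised to be `1` mod `4`. -/
lemma smaller_solution {a d b c : ℤ} (ha : a ≠ 0) (hd : d % 4 = 1) (hc : IsCoprime a d)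
    (h1 : a ^ 2 + d ^ 2 = b ^ 2) (h2 : 4 * a ^ 2 + d ^ 2 = c ^ 2) :
    ∃ a' d' b' c' : ℤ, a' ≠ 0 ∧ a'.natAbs < a.natAbs ∧ d' % 2 = 1 ∧ IsCoprime a' d' ∧
      a' ^ 2 + d' ^ 2 = b' ^ 2 ∧ 4 * a' ^ 2 + d' ^ 2 = c' ^ 2 := by
  obtain ⟨p, q, hd1, ha1, hpq, hp, hq⟩ := pythagorean_param h1 hd hc
  have h2d : IsCoprime 2 d := ⟨-(d / 2), 1, by omega⟩
  obtain ⟨m, n, hd2, ha2, hmn, hm, hn⟩ :=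
    pythagorean_param (a := 2 * a) (b := c) (by linear_combination h2) hd (h2d.mul_left hc)
  obtain ⟨N, rfl⟩ : ∃ N, n = 2 * N := ⟨n / 2, by omega⟩
  have hprod : m * N = p * q := by linarith
  obtain ⟨α, β, γ, δ, rfl, rfl, rfl, rfl, hβγ⟩ := four_number hprod (by omega)
  have hne : α * γ * (β * δ) ≠ 0 := by
    intro h0; apply ha; rw [ha1]; linear_combination 2 * h0
  have hδ : δ ≠ 0 := by rintro rfl; simp at hne
  have hγ : γ ≠ 0 := by rintro rfl; simp at hne
  have hαδ : IsCoprime α δ := hpq.of_mul_left_left.of_mul_right_right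
  have hα : α % 2 = 1 := by
    have : Odd (α * γ) := Int.odd_iff.2 hp
    exact Int.odd_iff.1 (Int.odd_mul.1 this).1
  have key : α ^ 2 * (γ ^ 2 - β ^ 2) = δ ^ 2 * (β ^ 2 - 4 * γ ^ 2) := by
    linear_combination hd2 - hd1
  obtain ⟨k, hk⟩ : δ ^ 2 ∣ γ ^ 2 - β ^ 2 :=
    (hαδ.symm.pow : IsCoprime (δ ^ 2) (α ^ 2)).dvd_of_dvd_mul_left ⟨_, key⟩
  have hk2 : β ^ 2 - 4 * γ ^ 2 = k * α ^ 2 := by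
    apply mul_left_cancel₀ (pow_ne_zero 2 hδ)
    rw [← key, hk]; ring
  have e1 : -3 * γ ^ 2 = k * (α ^ 2 + δ ^ 2) := by linear_combination hk + hk2
  have hk3 : k ∣ 3 := by
    obtain ⟨u, v, huv⟩ : IsCoprime (β ^ 2) (γ ^ 2) := hβγ.pow
    refine ⟨-(u * (α ^ 2 + 4 * δ ^ 2) + v * (α ^ 2 + δ ^ 2)), ?_⟩
    linear_combination -3 * huv - (4 * u + v) * hk - (u + v) * hk2
  have hγ2 : 0 < γ ^ 2 := by positivity
  have hδ2 : 0 < δ ^ 2 := by positivity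
  have hkneg : k < 0 := by
    by_contra! hk0
    have := mul_nonneg hk0 (add_nonneg (sq_nonneg α) (sq_nonneg δ))
    linarith
  have hk4 : -3 ≤ k := by
    have := Int.le_of_dvd (by norm_num) ((neg_dvd).2 hk3)
    omega
  have hk5 : k = -3 := by
    interval_cases k
    · rfl
    · norm_num at hk3
    · exfalso
      -- `3γ² = α² + δ²` forces `3` to divide both `α` and `δ`.
      have h3 : (α ^ 2 + δ ^ 2) % 3 = 0 := by
        have : α ^ 2 + δ ^ 2 = 3 * γ ^ 2 := by linarith
        omega
      have hα3 : α % 3 = 0 ∧ δ % 3 = 0 := by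
        have r1 : α % 3 = 0 ∨ α % 3 = 1 ∨ α % 3 = 2 := by omega
        have r2 : δ % 3 = 0 ∨ δ % 3 = 1 ∨ δ % 3 = 2 := by omega
        rcases r1 with r1 | r1 | r1 <;> rcases r2 with r2 | r2 | r2 <;>
          simp [pow_two, Int.add_emod, Int.mul_emod, r1, r2] at h3 ⊢
      have := hαδ.isUnit_of_dvd' (Int.dvd_of_emod_eq_zero hα3.1) (Int.dvd_of_emod_eq_zero hα3.2)
      norm_num [Int.isUnit_iff] at this
  subst hk5
  refine ⟨δ, α, γ, β, hδ, ?_, hα, hαδ.symm, by linarith, by linarith⟩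
  have hfac : a = 2 * (α * γ * β) * δ := by rw [ha1]; ring
  have hne' : α * γ * β ≠ 0 := by
    intro h0; apply hne; linear_combination δ * h0
  rw [hfac, Int.natAbs_mul, Int.natAbs_mul]
  have i1 : 0 < (α * γ * β).natAbs := Int.natAbs_pos.2 hne'
  have i2 : 0 < δ.natAbs := Int.natAbs_pos.2 hδ
  have i3 : Int.natAbs 2 = 2 := rfl
  rw [i3]
  nlinarith

/-- By infinite descent on `|a|`, the system has no primitive solution with `a ≠ 0` and `d` odd. -/
lemma descent (k : ℕ) : ∀ {a d b c : ℤ}, a.natAbs = k → d % 2 = 1 → IsCoprime a d →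
    a ^ 2 + d ^ 2 = b ^ 2 → 4 * a ^ 2 + d ^ 2 = c ^ 2 → a = 0 := by
  induction k using Nat.strong_induction_on with
  | _ k ih =>
    intro a d b c hk hd hc h1 h2
    by_contra ha
    obtain ⟨e, he, hce, hee⟩ : ∃ e : ℤ, e % 4 = 1 ∧ IsCoprime a e ∧ e ^ 2 = d ^ 2 := by
      rcases (by omega : d % 4 = 1 ∨ (-d) % 4 = 1) with h | h
      · exact ⟨d, h, hc, rfl⟩
      · exact ⟨-d, h, hc.neg_right, by ring⟩
    obtain ⟨a', d', b', c', ha', hlt, hd', hc', h1', h2'⟩ :=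
      smaller_solution (b := b) (c := c) ha he hce (by rw [hee]; exact h1) (by rw [hee]; exact h2)
    exact ha' (ih _ (hk ▸ hlt) rfl hd' hc' h1' h2')

lemma int_solutions {a d b c : ℤ} (h1 : a ^ 2 + d ^ 2 = b ^ 2) (h2 : 4 * a ^ 2 + d ^ 2 = c ^ 2) :
    a = 0 ∨ d = 0 := by
  by_cases ha : a = 0
  · exact Or.inl ha
  have hg : 0 < Int.gcd a d := Int.gcd_pos_of_ne_zero_left _ ha
  obtain ⟨a', d', hc, ea, ed⟩ := Int.exists_gcd_one hg
  set g : ℤ := (Int.gcd a d : ℤ) with hgdef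
  have hg0 : g ≠ 0 := by rw [hgdef]; exact_mod_cast hg.ne'
  replace hc := Int.isCoprime_iff_gcd_eq_one.2 hc
  clear_value g
  subst ea ed
  obtain ⟨b', rfl⟩ : g ∣ b :=
    (Int.pow_dvd_pow_iff two_ne_zero).1 ⟨a' ^ 2 + d' ^ 2, by rw [← h1]; ring⟩
  obtain ⟨c', rfl⟩ : g ∣ c :=
    (Int.pow_dvd_pow_iff two_ne_zero).1 ⟨4 * a' ^ 2 + d' ^ 2, by rw [← h2]; ring⟩
  have k1 : a' ^ 2 + d' ^ 2 = b' ^ 2 :=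
    mul_left_cancel₀ (pow_ne_zero 2 hg0) (by linear_combination h1)
  have k2 : 4 * a' ^ 2 + d' ^ 2 = c' ^ 2 :=
    mul_left_cancel₀ (pow_ne_zero 2 hg0) (by linear_combination h2)
  -- For `d' = 2e` the two equations exchange roles: `(e, a')` solves the system, with `a'` odd.
  rcases Int.emod_two_eq_zero_or_one d' with hd | hd
  · right
    obtain ⟨e, rfl⟩ : ∃ e, d' = 2 * e := ⟨d' / 2, by omega⟩
    obtain ⟨f, rfl⟩ : (2 : ℤ) ∣ c' :=
      (Int.pow_dvd_pow_iff two_ne_zero).1 ⟨a' ^ 2 + e ^ 2, by rw [← k2]; ring⟩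
    have hodd : a' % 2 = 1 := by
      by_contra h
      have := hc.isUnit_of_dvd' (Int.dvd_of_emod_eq_zero (by omega : a' % 2 = 0)) ⟨e, rfl⟩
      norm_num [Int.isUnit_iff] at this
    have he : e = 0 := descent _ (b := f) (c := b') rfl hodd hc.of_mul_right_right.symm
      (by linarith) (by linarith)
    simp [he]
  · left
    simp [descent _ rfl hd hc k1 k2]

lemma rat_solutions {a d b c : ℚ} (h1 : a ^ 2 + d ^ 2 = b ^ 2) (h2 : 4 * a ^ 2 + d ^ 2 = c ^ 2) :
    a = 0 ∨ d = 0 := by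
  obtain ⟨n, hn⟩ := IsLocalization.exist_integer_multiples_of_finset (nonZeroDivisors ℤ)
    ({a, d, b, c} : Finset ℚ)
  have hn0 : ((n : ℤ) : ℚ) ≠ 0 := by exact_mod_cast nonZeroDivisors.ne_zero n.2
  obtain ⟨a', ha⟩ := hn a (by simp)
  obtain ⟨d', hd⟩ := hn d (by simp)
  obtain ⟨b', hb⟩ := hn b (by simp)
  obtain ⟨c', hc⟩ := hn c (by simp)
  simp only [algebraMap_int_eq, eq_intCast, zsmul_eq_mul] at ha hd hb hc
  have k1 : (a' : ℚ) ^ 2 + (d' : ℚ) ^ 2 = (b' : ℚ) ^ 2 := by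
    rw [ha, hd, hb]; linear_combination ((n : ℤ) : ℚ) ^ 2 * h1
  have k2 : 4 * (a' : ℚ) ^ 2 + (d' : ℚ) ^ 2 = (c' : ℚ) ^ 2 := by
    rw [ha, hd, hc]; linear_combination ((n : ℤ) : ℚ) ^ 2 * h2
  rcases int_solutions (by exact_mod_cast k1) (by exact_mod_cast k2) with h | h
  · left; simpa [h, hn0] using ha
  · right; simpa [h, hn0] using hd

theorem stmt_10 (x y : ℚ) :
    y ^ 2 = x ^ 3 + 2 * x ^ 2 - 3 * x ↔
      ((x = 0 ∧ y = 0) ∨ (x = 1 ∧ y = 0) ∨ (x = -3 ∧ y = 0) ∨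
        (x = -1 ∧ (y = 2 ∨ y = -2)) ∨ (x = 3 ∧ (y = 6 ∨ y = -6))) := by
  constructor
  · intro h
    -- The numerators of the square roots of `x(2P) - 1`, `x(2P)`, `x(2P) + 3` over `2y`.
    rcases rat_solutions (a := 2 * y) (d := x ^ 2 - 2 * x - 3) (b := x ^ 2 + 3)
      (c := x ^ 2 + 6 * x - 3) (by linear_combination 4 * h) (by linear_combination 16 * h)
      with h0 | h0
    · have hy : y = 0 := by linarith
      subst hy
      have : x * ((x - 1) * (x + 3)) = 0 := by linear_combination -h
      rcases mul_eq_zero.1 this with h | h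
      · exact Or.inl ⟨h, rfl⟩
      rcases mul_eq_zero.1 h with h | h
      · exact Or.inr (Or.inl ⟨by linarith, rfl⟩)
      · exact Or.inr (Or.inr (Or.inl ⟨by linarith, rfl⟩))
    · have : (x + 1) * (x - 3) = 0 := by linear_combination h0
      rcases mul_eq_zero.1 this with hx | hx
      · obtain rfl : x = -1 := by linarith
        exact Or.inr (Or.inr (Or.inr (Or.inl
          ⟨rfl, sq_eq_sq_iff_eq_or_eq_neg.1 (by linear_combination h)⟩)))
      · obtain rfl : x = 3 := by linarith
        exact Or.inr (Or.inr (Or.inr (Or.inr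
          ⟨rfl, sq_eq_sq_iff_eq_or_eq_neg.1 (by linear_combination h)⟩)))
  · rintro (⟨rfl, rfl⟩ | ⟨rfl, rfl⟩ | ⟨rfl, rfl⟩ | ⟨rfl, rfl | rfl⟩ | ⟨rfl, rfl | rfl⟩) <;> norm_num
end
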